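/- arXiv:2112.10856 — 2 statements merged into one kernel-verified Lean document; each statement's English description precedes it below -/
import Mathlib

section
/- Let A be an n×n complex matrix of rank r. Let {f_1,...,f_{n-r}} be an orthonormal basis-type subset of N(A), {g_1,...,g_{n-r}} an orthonormal subset of N(A*), and d_1,...,d_{n-r} nonzero scalars. Then A + ∑_{k=1}^{n-r} d_k g_k f_k* is invertible and A† = (A + ∑_{k=1}^{n-r} d_k g_k f_k*)^{-1} − ∑_{k=1}^{n-r} (1/d_k) f_k g_k*. -/
noncomputable section
open Matrix

/-- `X` is the Moore–Penrose inverse of the complex matrix `A`. -/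
def IsMP {m n : ℕ} (A : Matrix (Fin m) (Fin n) ℂ) (X : Matrix (Fin n) (Fin m) ℂ) : Prop :=
  A * X * A = A ∧ X * A * X = X ∧ (A * X)ᴴ = A * X ∧ (X * A)ᴴ = X * A

/-!
Write `F`, `G` for the matrices with columns `f k`, `g k`, and `D` for the diagonal matrix of the
`d k`, so that the perturbed matrix is `M = A + G * D * Fᴴ`. Multiplying `M *ᵥ v = 0` by `Gᴴ` gives
`Fᴴ *ᵥ v = 0` and hence `A *ᵥ v = 0`; since the columns of `F` span the kernel of `A`, this forces
`v = 0`, and `M` is invertible. All cross terms vanish in `M * (X + F * D⁻¹ * Gᴴ) = A * X + G * Gᴴ`,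
and the right-hand side fixes `A` and `G`, hence `M`; cancelling the unit `M`, it equals `1`.
Besides being left inverses of `F` and `G`, the matrices `Fᴴ` and `Gᴴ` enter only through
`Fᴴ * X = 0` and `Gᴴ * A = 0`, so any `H` and `L` with these properties can take their place.
-/

section BiorthogonalPerturbation

variable {l m n ι R K : Type*} [Fintype n] [Fintype ι] [DecidableEq ι]

theorem add_mul_mul_mul_add_mul_mul [Semiring R] {A : Matrix l n R} {X : Matrix n m R}
    {F : Matrix n ι R} {G : Matrix l ι R} {H : Matrix ι n R} {L : Matrix ι m R}
    {D E : Matrix ι ι R} (hAF : A * F = 0) (hHX : H * X = 0) (hHF : H * F = 1) (hDE : D * E = 1) :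
    (A + G * D * H) * (X + F * E * L) = A * X + G * L := by
  have hAFEL : A * (F * E * L) = 0 := by
    simp only [← Matrix.mul_assoc, hAF, Matrix.zero_mul]
  have hGDHX : G * D * H * X = 0 := by
    rw [Matrix.mul_assoc, hHX, Matrix.mul_zero]
  have hGDHFEL : G * D * H * (F * E * L) = G * L :=
    calc G * D * H * (F * E * L) = G * (D * ((H * F) * E)) * L := by simp only [Matrix.mul_assoc]
      _ = G * L := by rw [hHF, Matrix.one_mul, hDE, Matrix.mul_one]
  rw [Matrix.add_mul, Matrix.mul_add, Matrix.mul_add, hAFEL, hGDHX, hGDHFEL, add_zero, zero_add]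

theorem mul_add_mul_mul_add_mul_mul_self [Semiring R] [Fintype m] {A : Matrix m n R}
    {X : Matrix n m R} {G : Matrix m ι R} {H : Matrix ι n R} {L : Matrix ι m R} {D : Matrix ι ι R}
    (hAXA : A * X * A = A) (hXG : X * G = 0) (hLA : L * A = 0) (hLG : L * G = 1) :
    (A * X + G * L) * (A + G * D * H) = A + G * D * H := by
  have hA : (A * X + G * L) * A = A := by
    rw [Matrix.add_mul, hAXA, Matrix.mul_assoc, hLA, Matrix.mul_zero, add_zero]
  have hG : (A * X + G * L) * G = G := by
    rw [Matrix.add_mul, Matrix.mul_assoc, hXG, Matrix.mul_zero, Matrix.mul_assoc, hLG,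
      Matrix.mul_one, zero_add]
  rw [Matrix.mul_add, hA, ← Matrix.mul_assoc, ← Matrix.mul_assoc, hG]

variable [Field K]

theorem ker_mulVecLin_eq_range_mulVecLin {A : Matrix l n K} {F : Matrix n ι K} {H : Matrix ι n K}
    (hcard : Fintype.card n ≤ A.rank + Fintype.card ι) (hAF : A * F = 0) (hHF : H * F = 1) :
    LinearMap.ker A.mulVecLin = LinearMap.range F.mulVecLin := by
  have range_le_ker : LinearMap.range F.mulVecLin ≤ LinearMap.ker A.mulVecLin := by
    rw [LinearMap.range_le_ker_iff, ← mulVecLin_mul, hAF, mulVecLin_zero]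
  have F_injective : Function.Injective F.mulVecLin :=
    Function.LeftInverse.injective (g := H.mulVecLin) fun v => by simp [hHF]
  have finrank_range : Module.finrank K (LinearMap.range F.mulVecLin) = Fintype.card ι := by
    rw [LinearMap.finrank_range_of_inj F_injective, Module.finrank_fintype_fun_eq_card]
  have rank_nullity :
      A.rank + Module.finrank K (LinearMap.ker A.mulVecLin) = Fintype.card n := by
    rw [Matrix.rank, LinearMap.finrank_range_add_finrank_ker, Module.finrank_fintype_fun_eq_card]
  exact (Submodule.eq_of_le_of_finrank_le range_le_ker (by lia)).symm

variable [DecidableEq n] {A X : Matrix n n K} {F G : Matrix n ι K} {H L : Matrix ι n K}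
  {D E : Matrix ι ι K}

theorem isUnit_add_mul_mul (hcard : Fintype.card n ≤ A.rank + Fintype.card ι) (hAF : A * F = 0)
    (hHF : H * F = 1) (hLA : L * A = 0) (hLG : L * G = 1) (hD : IsUnit D) :
    IsUnit (A + G * D * H) := by
  have hLM : L * (A + G * D * H) = D * H := by
    rw [Matrix.mul_add, hLA, zero_add, ← Matrix.mul_assoc, ← Matrix.mul_assoc, hLG, Matrix.one_mul]
  rw [← mulVec_injective_iff_isUnit]
  refine (injective_iff_map_eq_zero (A + G * D * H).mulVecLin).mpr fun v hMv => ?_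
  rw [mulVecLin_apply] at hMv
  have hHv : H *ᵥ v = 0 := by
    refine mulVec_injective_of_isUnit hD ?_
    rw [mulVec_mulVec, ← hLM, ← mulVec_mulVec, hMv, mulVec_zero, mulVec_zero]
  have hAv : A *ᵥ v = 0 := by
    rwa [add_mulVec, ← mulVec_mulVec, hHv, mulVec_zero, add_zero] at hMv
  obtain ⟨w, rfl⟩ : v ∈ LinearMap.range F.mulVecLin :=
    ker_mulVecLin_eq_range_mulVecLin hcard hAF hHF ▸ LinearMap.mem_ker.mpr hAv
  have hw : w = 0 := by simpa [hHF] using hHv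
  rw [hw, map_zero]

theorem inv_add_mul_mul (hcard : Fintype.card n ≤ A.rank + Fintype.card ι)
    (hAXA : A * X * A = A) (hAF : A * F = 0) (hHX : H * X = 0) (hHF : H * F = 1)
    (hXG : X * G = 0) (hLA : L * A = 0) (hLG : L * G = 1) (hDE : D * E = 1) :
    (A + G * D * H)⁻¹ = X + F * E * L := by
  have hM : IsUnit (A + G * D * H) :=
    isUnit_add_mul_mul hcard hAF hHF hLA hLG (.of_mul_eq_one E hDE)
  refine Matrix.inv_eq_right_inv (hM.mul_right_cancel ?_)
  rw [add_mul_mul_mul_add_mul_mul hAF hHX hHF hDE,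
    mul_add_mul_mul_add_mul_mul_self hAXA hXG hLA hLG, one_mul]

end BiorthogonalPerturbation

section MoorePenrose

variable {m n ι R K : Type*} [Fintype m] [Fintype n]

/-- `X` satisfies the four Penrose equations for `A`, i.e. it is the Moore–Penrose inverse of `A`.
This is `IsMP` for rectangular matrices over any ring with involution. -/
structure IsMoorePenrose [NonUnitalSemiring R] [Star R] (A : Matrix m n R) (X : Matrix n m R) :
    Prop where
  mul_inv_mul : A * X * A = A
  inv_mul_inv : X * A * X = X
  isHermitian_mul_inv : (A * X).IsHermitian
  isHermitian_inv_mul : (X * A).IsHermitian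

theorem IsMP.isMoorePenrose {m n : ℕ} {A : Matrix (Fin m) (Fin n) ℂ}
    {X : Matrix (Fin n) (Fin m) ℂ} (hX : IsMP A X) : IsMoorePenrose A X :=
  ⟨hX.1, hX.2.1, hX.2.2.1, hX.2.2.2⟩

namespace IsMoorePenrose

variable [NonUnitalSemiring R] [StarRing R] {A : Matrix m n R} {X : Matrix n m R}

theorem conjTranspose_mul_inv_eq_zero (hX : IsMoorePenrose A X) {F : Matrix n ι R}
    (hAF : A * F = 0) : Fᴴ * X = 0 :=
  calc Fᴴ * X = Fᴴ * (X * A)ᴴ * X := by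
        rw [hX.isHermitian_inv_mul.eq, Matrix.mul_assoc, hX.inv_mul_inv]
    _ = (X * (A * F))ᴴ * X := by rw [← conjTranspose_mul, Matrix.mul_assoc]
    _ = 0 := by rw [hAF, Matrix.mul_zero, conjTranspose_zero, Matrix.zero_mul]

theorem inv_mul_eq_zero (hX : IsMoorePenrose A X) {G : Matrix m ι R} (hAG : Aᴴ * G = 0) :
    X * G = 0 :=
  calc X * G = X * (A * X)ᴴ * G := by
        rw [hX.isHermitian_mul_inv.eq, ← Matrix.mul_assoc, hX.inv_mul_inv]
    _ = X * (Xᴴ * (Aᴴ * G)) := by rw [conjTranspose_mul]; simp only [Matrix.mul_assoc]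
    _ = 0 := by rw [hAG, Matrix.mul_zero, Matrix.mul_zero]

end IsMoorePenrose

theorem IsMoorePenrose.inv_add_mul_mul_conjTranspose [Fintype ι] [DecidableEq ι] [DecidableEq n]
    [Field K] [StarRing K] {A X : Matrix n n K} (hX : IsMoorePenrose A X)
    (hcard : Fintype.card n ≤ A.rank + Fintype.card ι) {F G : Matrix n ι K} {D E : Matrix ι ι K}
    (hF : Fᴴ * F = 1) (hG : Gᴴ * G = 1) (hAF : A * F = 0) (hAG : Aᴴ * G = 0) (hDE : D * E = 1) :
    IsUnit (A + G * D * Fᴴ) ∧ (A + G * D * Fᴴ)⁻¹ = X + F * E * Gᴴ := by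
  have hGA : Gᴴ * A = 0 := by simpa using congrArg conjTranspose hAG
  exact ⟨isUnit_add_mul_mul hcard hAF hF hGA hG (.of_mul_eq_one E hDE),
    inv_add_mul_mul hcard hX.mul_inv_mul hAF (hX.conjTranspose_mul_inv_eq_zero hAF) hF
      (hX.inv_mul_eq_zero hAG) hGA hG hDE⟩

end MoorePenrose

section Columns

variable {m n ι R : Type*}

theorem sum_smul_vecMulVec_star [CommSemiring R] [StarRing R] [Fintype ι] [DecidableEq ι]
    (u : ι → m → R) (v : ι → n → R) (d : ι → R) :
    ∑ k, d k • vecMulVec (u k) (star (v k)) = (of u)ᵀ * diagonal d * ((of v)ᵀ)ᴴ := by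
  ext i j
  rw [Matrix.mul_apply, Matrix.sum_apply]
  simp only [Matrix.smul_apply, smul_eq_mul, vecMulVec_apply, mul_diagonal, conjTranspose_apply,
    transpose_apply, of_apply, Pi.star_apply, mul_left_comm, mul_assoc]

theorem conjTranspose_mul_self_eq_one_iff [NonAssocSemiring R] [Star R] [Fintype n] [DecidableEq ι]
    {u : ι → n → R} :
    ((of u)ᵀ)ᴴ * (of u)ᵀ = 1 ↔ ∀ k l, star (u k) ⬝ᵥ u l = if k = l then 1 else 0 := by
  simp only [← Matrix.ext_iff, Matrix.one_apply]
  rfl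

theorem mul_transpose_of_eq_zero_iff [NonUnitalNonAssocSemiring R] [Fintype n]
    {A : Matrix m n R} {u : ι → n → R} : A * (of u)ᵀ = 0 ↔ ∀ k, A *ᵥ u k = 0 := by
  simp only [← Matrix.ext_iff, funext_iff]
  exact forall_comm

end Columns

theorem stmt11_general {n ι K : Type*} [Fintype n] [DecidableEq n] [Fintype ι] [DecidableEq ι]
    [Field K] [StarRing K] {A X : Matrix n n K} (hX : IsMoorePenrose A X)
    (hcard : Fintype.card n ≤ A.rank + Fintype.card ι) {f g : ι → n → K}
    (hf : ∀ k l, star (f k) ⬝ᵥ f l = if k = l then 1 else 0)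
    (hg : ∀ k l, star (g k) ⬝ᵥ g l = if k = l then 1 else 0)
    (hfN : ∀ k, A *ᵥ f k = 0) (hgN : ∀ k, Aᴴ *ᵥ g k = 0) {d : ι → K} (hd : ∀ k, d k ≠ 0) :
    IsUnit (A + ∑ k, d k • vecMulVec (g k) (star (f k))) ∧
    X = (A + ∑ k, d k • vecMulVec (g k) (star (f k)))⁻¹ -
      ∑ k, (d k)⁻¹ • vecMulVec (f k) (star (g k)) := by
  have hDE : diagonal d * diagonal (fun k => (d k)⁻¹) = 1 := by simp [hd]
  simp only [sum_smul_vecMulVec_star, eq_sub_iff_add_eq]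
  exact (hX.inv_add_mul_mul_conjTranspose hcard (conjTranspose_mul_self_eq_one_iff.mpr hf)
    (conjTranspose_mul_self_eq_one_iff.mpr hg) (mul_transpose_of_eq_zero_iff.mpr hfN)
    (mul_transpose_of_eq_zero_iff.mpr hgN) hDE).imp_right Eq.symm

theorem stmt11 {n r : ℕ} (A : Matrix (Fin n) (Fin n) ℂ) (hr : A.rank = r)
    (f : Fin (n - r) → Fin n → ℂ) (g : Fin (n - r) → Fin n → ℂ)
    (hf : ∀ k l, star (f k) ⬝ᵥ f l = if k = l then 1 else 0)
    (hg : ∀ k l, star (g k) ⬝ᵥ g l = if k = l then 1 else 0)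
    (hfN : ∀ k, A.mulVec (f k) = 0) (hgN : ∀ k, Aᴴ.mulVec (g k) = 0)
    (d : Fin (n - r) → ℂ) (hd : ∀ k, d k ≠ 0)
    (X : Matrix (Fin n) (Fin n) ℂ) (hX : IsMP A X) :
    IsUnit (A + ∑ k, d k • vecMulVec (g k) (star (f k))) ∧
    X = (A + ∑ k, d k • vecMulVec (g k) (star (f k)))⁻¹ -
      ∑ k, (d k)⁻¹ • vecMulVec (f k) (star (g k)) :=
  stmt11_general hX.isMoorePenrose (by simp [hr, le_add_tsub]) hf hg hfN hgN hd
end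
end

section
/- Let A and B be m×n complex matrices with R(B*) = N(A). Then A*A + B*B is invertible and A† is the unique solution X of the equation (A*A + B*B) X = A*. -/
/-!
`Aᴴ * A + Bᴴ * B` is the Gram matrix of `A` stacked on `B`, so its kernel is `ker A ⊓ ker B`. When
`ker A` is the range of `Bᴴ`, this intersection is trivial, because `B * Bᴴ` and `Bᴴ` have the same
kernel. A Moore–Penrose inverse `G` of `A` solves the normal equation `Aᴴ * A * G = Aᴴ`, and
`B * G = 0` because `A * Bᴴ = 0` and the columns of `G` lie in the range of `Aᴴ`.
-/

noncomputable section
open Matrix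

section Kernel

variable {l m n p R : Type*}

theorem range_mulVecLin_le_ker_mulVecLin_iff [CommSemiring R] [Fintype m] [Fintype n]
    {M : Matrix l m R} {N : Matrix m n R} :
    LinearMap.range N.mulVecLin ≤ LinearMap.ker M.mulVecLin ↔ M * N = 0 := by
  classical
  rw [LinearMap.range_le_ker_iff, ← mulVecLin_mul, ← toLin'_apply',
    map_eq_zero_iff _ toLin'.injective]

theorem ker_mulVecLin_fromRows [CommSemiring R] [Fintype n] (A : Matrix m n R) (B : Matrix p n R) :
    LinearMap.ker (fromRows A B).mulVecLin =
      LinearMap.ker A.mulVecLin ⊓ LinearMap.ker B.mulVecLin := by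
  ext v
  simp only [LinearMap.mem_ker, Submodule.mem_inf, mulVecLin_apply, fromRows_mulVec,
    ← Sum.elim_zero_zero, Sum.elim_eq_iff]

theorem disjoint_range_mulVecLin_conjTranspose_ker [CommRing R] [NoZeroDivisors R] [PartialOrder R]
    [StarRing R] [StarOrderedRing R] [Fintype m] [Fintype n] (B : Matrix m n R) :
    Disjoint (LinearMap.range Bᴴ.mulVecLin) (LinearMap.ker B.mulVecLin) := by
  rw [Submodule.disjoint_def]
  rintro _ ⟨w, rfl⟩ hw
  rwa [LinearMap.mem_ker, mulVecLin_apply, mulVecLin_apply, mulVec_mulVec,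
    self_mul_conjTranspose_mulVec_eq_zero] at hw

end Kernel

section Gram

variable {m n p K : Type*} [Field K] [PartialOrder K] [StarRing K] [StarOrderedRing K]
  [Fintype m] [Fintype n] [DecidableEq n] [Fintype p]

theorem isUnit_conjTranspose_mul_self_iff_ker_eq_bot {A : Matrix m n K} :
    IsUnit (Aᴴ * A) ↔ LinearMap.ker A.mulVecLin = ⊥ := by
  rw [← ker_mulVecLin_conjTranspose_mul_self, LinearMap.ker_eq_bot, coe_mulVecLin,
    mulVec_injective_iff_isUnit]

theorem isUnit_conjTranspose_mul_self_add_iff_disjoint_ker {A : Matrix m n K} {B : Matrix p n K} :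
    IsUnit (Aᴴ * A + Bᴴ * B) ↔
      Disjoint (LinearMap.ker A.mulVecLin) (LinearMap.ker B.mulVecLin) := by
  rw [← fromCols_mul_fromRows, ← conjTranspose_fromRows_eq_fromCols_conjTranspose,
    isUnit_conjTranspose_mul_self_iff_ker_eq_bot, ker_mulVecLin_fromRows, disjoint_iff]

end Gram

/-- `G` is a Moore–Penrose inverse of `A`, characterised by the four Penrose equations; this is
`IsMP` with arbitrary finite index types and entries in a semiring with a star operation. -/
structure IsMoorePenroseInverse {m n R : Type*} [NonUnitalSemiring R] [Star R] [Fintype m]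
    [Fintype n] (A : Matrix m n R) (G : Matrix n m R) : Prop where
  mul_mul_self : A * G * A = A
  mul_mul_inverse : G * A * G = G
  isHermitian_mul_inverse : (A * G).IsHermitian
  isHermitian_inverse_mul : (G * A).IsHermitian

namespace IsMoorePenroseInverse

variable {m n p R : Type*} [NonUnitalSemiring R] [StarRing R] [Fintype m] [Fintype n]
  {A : Matrix m n R} {G : Matrix n m R}

theorem conjTranspose_mul_self_mul (hG : IsMoorePenroseInverse A G) : Aᴴ * A * G = Aᴴ := by
  calc Aᴴ * A * G = Aᴴ * (A * G)ᴴ := by rw [hG.isHermitian_mul_inverse, Matrix.mul_assoc]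
    _ = (A * G * A)ᴴ := (conjTranspose_mul _ _).symm
    _ = Aᴴ := by rw [hG.mul_mul_self]

theorem eq_conjTranspose_mul (hG : IsMoorePenroseInverse A G) : G = Aᴴ * (Gᴴ * G) := by
  calc G = (G * A)ᴴ * G := by rw [hG.isHermitian_inverse_mul, hG.mul_mul_inverse]
    _ = Aᴴ * (Gᴴ * G) := by rw [conjTranspose_mul, Matrix.mul_assoc]

theorem mul_eq_zero_of_mul_conjTranspose_eq_zero (hG : IsMoorePenroseInverse A G)
    {B : Matrix p n R} (hAB : A * Bᴴ = 0) : B * G = 0 := by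
  have hBA : B * Aᴴ = 0 := by
    simpa only [conjTranspose_mul, conjTranspose_conjTranspose, conjTranspose_zero] using
      congrArg conjTranspose hAB
  rw [hG.eq_conjTranspose_mul, ← Matrix.mul_assoc, hBA, Matrix.zero_mul]

theorem conjTranspose_mul_self_add_mul [Fintype p] (hG : IsMoorePenroseInverse A G)
    {B : Matrix p n R} (hAB : A * Bᴴ = 0) : (Aᴴ * A + Bᴴ * B) * G = Aᴴ := by
  rw [Matrix.add_mul, hG.conjTranspose_mul_self_mul, Matrix.mul_assoc,
    hG.mul_eq_zero_of_mul_conjTranspose_eq_zero hAB, Matrix.mul_zero, add_zero]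

end IsMoorePenroseInverse

theorem stmt12_general {m n p K : Type*} [Field K] [PartialOrder K] [StarRing K]
    [StarOrderedRing K] [Fintype m] [Fintype n] [DecidableEq n] [Fintype p]
    {A : Matrix m n K} {B : Matrix p n K}
    (hRB : LinearMap.range Bᴴ.mulVecLin = LinearMap.ker A.mulVecLin)
    {G : Matrix n m K} (hG : IsMoorePenroseInverse A G) :
    IsUnit (Aᴴ * A + Bᴴ * B) ∧
    ∀ X : Matrix n m K, (Aᴴ * A + Bᴴ * B) * X = Aᴴ ↔ X = G := by
  have hUnit : IsUnit (Aᴴ * A + Bᴴ * B) := by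
    rw [isUnit_conjTranspose_mul_self_add_iff_disjoint_ker, ← hRB]
    exact disjoint_range_mulVecLin_conjTranspose_ker B
  have hSol : (Aᴴ * A + Bᴴ * B) * G = Aᴴ :=
    hG.conjTranspose_mul_self_add_mul (range_mulVecLin_le_ker_mulVecLin_iff.mp hRB.le)
  obtain ⟨_⟩ := hUnit.nonempty_invertible
  refine ⟨hUnit, fun X => ?_⟩
  rw [← Matrix.mul_right_inj_of_invertible (Aᴴ * A + Bᴴ * B) (y := G), hSol]

theorem stmt12 {m n : ℕ} (A B : Matrix (Fin m) (Fin n) ℂ)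
    (hRB : LinearMap.range Bᴴ.mulVecLin = LinearMap.ker A.mulVecLin)
    (G : Matrix (Fin n) (Fin m) ℂ) (hG : IsMP A G) :
    IsUnit (Aᴴ * A + Bᴴ * B) ∧
    ∀ X : Matrix (Fin n) (Fin m) ℂ, (Aᴴ * A + Bᴴ * B) * X = Aᴴ ↔ X = G := by
  obtain ⟨hAGA, hGAG, hAG, hGA⟩ := hG
  open scoped ComplexOrder in exact stmt12_general hRB ⟨hAGA, hGAG, hAG, hGA⟩
end
end
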